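/- For a skew-symmetric 2n×2n matrix A = (a_{ij}) over ℝ, the Pfaffian admits the Grassmann integral representation Pf(A) = ∫ exp((1/2) Σ_{i,j} φ_i a_{ij} φ_j) dφ, i.e., Pf(A) equals the coefficient of φ₁∧⋯∧φ_{2n} in the exponential (computed in the exterior algebra on generators φ₁,…,φ_{2n}) of the element (1/2) Σ_{i,j} a_{ij} φ_i∧φ_j. -/

import Mathlib

/-- The Pfaffian of a real `2n × 2n` matrix. -/
noncomputable def pfaffianR (n : ℕ) (A : Matrix (Fin (2 * n)) (Fin (2 * n)) ℝ) : ℝ :=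
  (1 / (2 ^ n * n.factorial) : ℝ) *
    ∑ σ : Equiv.Perm (Fin (2 * n)), ((Equiv.Perm.sign σ : ℤ) : ℝ) *
      ∏ k : Fin n, A (σ ⟨2 * k.1, by have := k.2; omega⟩)
        (σ ⟨2 * k.1 + 1, by have := k.2; omega⟩)

/-- The Grassmann generators `φ_i` in the exterior algebra on `ℝ^{2n}`. -/
noncomputable def φ (n : ℕ) (i : Fin (2 * n)) :
    ExteriorAlgebra ℝ (Fin (2 * n) → ℝ) :=
  ExteriorAlgebra.ι ℝ (Pi.single i 1)

theorem pf_prod_pairs {M : Type*} [Monoid M] (n : ℕ) (x : Fin (2 * n) → M) :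
    (List.ofFn (fun k : Fin n => x ⟨2 * k.1, by have := k.2; omega⟩ *
      x ⟨2 * k.1 + 1, by have := k.2; omega⟩)).prod = (List.ofFn x).prod := by
  rw [List.ofFn_mul', List.prod_flatten, List.map_ofFn]
  congr 2
  funext k
  simp [List.ofFn_succ]

theorem pf_pow_sum {ι R : Type*} [Fintype ι] [Ring R] [Algebra ℝ R] (n : ℕ) (a : ι → ℝ)
    (g : ι → R) :
    (∑ p, a p • g p) ^ n =
      ∑ f : Fin n → ι, (∏ k, a (f k)) • (List.ofFn (fun k => g (f k))).prod := by
  classical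
  have h := (MultilinearMap.mkPiAlgebraFin ℝ n R).map_sum (fun (_ : Fin n) (p : ι) => a p • g p)
  simp only [MultilinearMap.map_smul_univ, MultilinearMap.mkPiAlgebraFin_apply] at h
  rw [← h]
  simp

theorem pf_prod_φ (n : ℕ) (h : Fin (2 * n) → Fin (2 * n)) :
    (List.ofFn (fun i => φ n (h i))).prod =
      ExteriorAlgebra.ιMulti ℝ (2 * n) (fun i => (Pi.single (h i) 1 : Fin (2 * n) → ℝ)) := by
  rw [ExteriorAlgebra.ιMulti_apply]
  rfl

theorem pf_sum (n : ℕ) (A : Matrix (Fin (2 * n)) (Fin (2 * n)) ℝ) :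
    (∑ p : Fin (2 * n) × Fin (2 * n), A p.1 p.2 • (φ n p.1 * φ n p.2)) ^ n =
      (∑ σ : Equiv.Perm (Fin (2 * n)), ((Equiv.Perm.sign σ : ℤ) : ℝ) *
      ∏ k : Fin n, A (σ ⟨2 * k.1, by have := k.2; omega⟩)
        (σ ⟨2 * k.1 + 1, by have := k.2; omega⟩)) • (List.ofFn (φ n)).prod := by
  rw [pf_pow_sum n (fun p : Fin (2 * n) × Fin (2 * n) => A p.1 p.2)
    (fun p => φ n p.1 * φ n p.2), Finset.sum_smul]
  symm
  apply Fintype.sum_of_injective (fun (σ : Equiv.Perm (Fin (2 * n))) (k : Fin n) =>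
    (σ ⟨2 * k.1, by have := k.2; omega⟩, σ ⟨2 * k.1 + 1, by have := k.2; omega⟩))
  · intro σ τ hst
    ext i
    have h := congrFun hst ⟨i.1 / 2, by have := i.2; omega⟩
    simp only [Prod.mk.injEq] at h
    rcases Nat.mod_two_eq_zero_or_one i.1 with hi | hi
    · have e : (⟨2 * (i.1 / 2), by have := i.2; omega⟩ : Fin (2 * n)) = i := by
        ext; simp only; omega
      rw [e] at h
      rw [h.1]
    · have e : (⟨2 * (i.1 / 2) + 1, by have := i.2; omega⟩ : Fin (2 * n)) = i := by
        ext; simp only; omega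
      rw [e] at h
      rw [h.2]
  · intro f hf
    let h : Fin (2 * n) → Fin (2 * n) := fun i =>
      if i.1 % 2 = 0 then (f ⟨i.1 / 2, by have := i.2; omega⟩).1
      else (f ⟨i.1 / 2, by have := i.2; omega⟩).2
    have h0 : ∀ k : Fin n, h ⟨2 * k.1, by have := k.2; omega⟩ = (f k).1 := by
      intro k
      simp [h]
    have h1 : ∀ k : Fin n, h ⟨2 * k.1 + 1, by have := k.2; omega⟩ = (f k).2 := by
      intro k
      have e : (2 * k.1 + 1) / 2 = k.1 := by omega
      simp [h, e, Nat.add_mod]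
    have hni : ¬ Function.Injective h := by
      intro hi
      apply hf
      refine ⟨Equiv.ofBijective h (Finite.injective_iff_bijective.mp hi), ?_⟩
      funext k
      simp only [Equiv.ofBijective_apply, h0, h1]
    have hz : (List.ofFn (fun k => φ n (f k).1 * φ n (f k).2)).prod = 0 := by
      simp only [← h0, ← h1]
      rw [pf_prod_pairs n (fun i => φ n (h i)), pf_prod_φ]
      apply AlternatingMap.map_eq_zero_of_not_injective
      intro hi
      apply hni
      intro i j hij
      apply hi
      simp only [hij]
    rw [hz, smul_zero]
  · intro σ
    dsimp only
    rw [pf_prod_pairs n (fun i => φ n (σ i)), pf_prod_φ n (fun i => i), pf_prod_φ n (fun i => σ i)]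
    have := AlternatingMap.map_perm (ExteriorAlgebra.ιMulti ℝ (2 * n))
      (fun i => (Pi.single i 1 : Fin (2 * n) → ℝ)) σ
    simp only [Function.comp_def] at this
    rw [this, mul_comm (((Equiv.Perm.sign σ : ℤ) : ℝ)), mul_smul]
    congr 1

/-- Grassmann (Berezin) integral representation of the Pfaffian: for a
skew-symmetric `2n × 2n` real matrix `A` and
`ω = (1/2) Σ_{i,j} a_{ij} φ_i φ_j` in the Grassmann algebra generated by
`φ₁, …, φ_{2n}`, the top-degree term `ω^n / n!` of `exp(ω)` equals
`Pf(A) · φ₁⋯φ_{2n}`; that is, `∫ exp((1/2) Σ φ_i a_{ij} φ_j) dφ = Pf(A)`. -/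
theorem pfaffian_berezin_integral (n : ℕ)
    (A : Matrix (Fin (2 * n)) (Fin (2 * n)) ℝ) (hA : A.transpose = -A) :
    ((n.factorial : ℝ)⁻¹) •
        ((2⁻¹ : ℝ) • ∑ i : Fin (2 * n), ∑ j : Fin (2 * n),
            A i j • (φ n i * φ n j)) ^ n =
      pfaffianR n A • (List.ofFn (φ n)).prod := by
  rw [smul_pow, ← Fintype.sum_prod_type'
    (fun i j : Fin (2 * n) => A i j • (φ n i * φ n j)), pf_sum, smul_smul, smul_smul, pfaffianR]
  congr 1
  have : (n.factorial : ℝ) ≠ 0 := by positivity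
  rw [inv_pow]
  field_simp
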